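/- Let G be a finite group and K an ordered G-simplicial complex. Let C_G(|K|) denote the least number of closed invariant sets covering |K|×|K| on each of which the two projections p_1, p_2: |K|×|K| → |K| restrict to G-homotopic maps. Then TC_G(|K|) = C_G(|K|); that is, equivariant topological complexity of |K| can be computed using closed invariant covers. -/

import Mathlib

/-! ### Module A: equivariant TC / CC / LS for topological G-spaces -/

/-- The zigzag order `0 < 1 > 2 < 3 > ⋯` on natural numbers. -/
def zigzagLE (i j : ℕ) : Prop := i = j ∨ (i % 2 = 0 ∧ (j = i + 1 ∨ i = j + 1))

/-- The combinatorial interval `J m = {0, 1, …, m}`. -/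
def J (m : ℕ) : Type := Fin (m + 1)

namespace J

/-- The underlying natural number of a point of `J m`. -/
def val {m : ℕ} (i : J m) : ℕ := Fin.val i

/-- The initial point `0` of the combinatorial interval. -/
def zero (m : ℕ) : J m := (0 : Fin (m + 1))

/-- The final point `m` of the combinatorial interval. -/
def last (m : ℕ) : J m := Fin.last m

/-- The topology on `J m` whose open sets are the down-closed sets for the zigzag order. -/
instance (m : ℕ) : TopologicalSpace (J m) where
  IsOpen U := ∀ ⦃a⦄, a ∈ U → ∀ ⦃b⦄, zigzagLE (J.val b) (J.val a) → b ∈ U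
  isOpen_univ := fun a _ b _ => Set.mem_univ b
  isOpen_inter := fun s t hs ht a ha b hba => ⟨hs ha.1 hba, ht ha.2 hba⟩
  isOpen_sUnion := fun S hS a ha b hba => by
    obtain ⟨t, htS, hat⟩ := ha
    exact ⟨t, htS, hS t htS hat hba⟩

end J

section Equivariant

variable (G : Type*) [Group G]

/-- A set is `G`-invariant if it is stable under the action of every group element. -/
def GInvariant {α : Type*} [SMul G α] (U : Set α) : Prop :=
  ∀ g : G, ∀ x ∈ U, g • x ∈ U

variable (X : Type*) [TopologicalSpace X] [MulAction G X]

/-- `U ⊆ X × X` admits a continuous equivariant section of the free path fibration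
`π : X^I → X × X`, `α ↦ (α 0, α 1)`. -/
def EqNavigable (U : Set (X × X)) : Prop :=
  ∃ s : U → C(unitInterval, X), Continuous s ∧
    (∀ u : U, s u 0 = (u : X × X).1 ∧ s u 1 = (u : X × X).2) ∧
    (∀ (g : G) (u : U) (h : g • (u : X × X) ∈ U) (t : unitInterval),
      s ⟨g • (u : X × X), h⟩ t = g • s u t)

/-- The equivariant topological complexity: the least `k` such that `X × X` admits a cover by
`k` open invariant sets, each admitting a continuous equivariant section of the free path
fibration; `⊤` if there is no such cover. -/
noncomputable def eqTC : ℕ∞ :=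
  sInf {k : ℕ∞ | ∃ n : ℕ, k = n ∧ ∃ U : Fin n → Set (X × X),
    (∀ i, IsOpen (U i)) ∧ (∀ i, GInvariant G (U i)) ∧ (⋃ i, U i) = Set.univ ∧
    ∀ i, EqNavigable G X (U i)}

/-- `U ⊆ X × X` admits a continuous equivariant section of the combinatorial path fibration
`q_m : X^{J_m} → X × X`, `β ↦ (β 0, β m)`. -/
def EqNavigableJ (m : ℕ) (U : Set (X × X)) : Prop :=
  ∃ s : U → C(J m, X), Continuous s ∧
    (∀ u : U, s u (J.zero m) = (u : X × X).1 ∧ s u (J.last m) = (u : X × X).2) ∧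
    (∀ (g : G) (u : U) (h : g • (u : X × X) ∈ U) (t : J m),
      s ⟨g • (u : X × X), h⟩ t = g • s u t)

/-- The equivariant combinatorial complexity with paths of length `m`: the least `k` such that
`X × X` admits a cover by `k` open invariant sets, each admitting a continuous equivariant
section of the combinatorial path fibration `q_m`; `⊤` if there is no such cover. -/
noncomputable def eqCCm (m : ℕ) : ℕ∞ :=
  sInf {k : ℕ∞ | ∃ n : ℕ, k = n ∧ ∃ U : Fin n → Set (X × X),
    (∀ i, IsOpen (U i)) ∧ (∀ i, GInvariant G (U i)) ∧ (⋃ i, U i) = Set.univ ∧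
    ∀ i, EqNavigableJ G X m (U i)}

/-- The equivariant combinatorial complexity: the minimum over all `m ≥ 1` of `eqCCm`. -/
noncomputable def eqCC : ℕ∞ := ⨅ m : ℕ, eqCCm G X (m + 1)

/-- `U ⊆ X` is `G`-categorical for the orbit of `x₀`: the inclusion of `U` into `X` is
`G`-homotopic to a map taking values in the orbit of `x₀`. -/
def GCategoricalAt (U : Set X) (x₀ : X) : Prop :=
  ∃ F : U × unitInterval → X, Continuous F ∧
    (∀ u : U, F (u, 0) = (u : X)) ∧
    (∀ (g : G) (u : U) (h : g • (u : X) ∈ U) (t : unitInterval),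
      F (⟨g • (u : X), h⟩, t) = g • F (u, t)) ∧
    (∀ u : U, F (u, 1) ∈ MulAction.orbit G x₀)

/-- `U ⊆ X` is `G`-categorical: the inclusion of `U` into `X` is `G`-homotopic to a map taking
values in a single orbit. -/
def GCategorical (U : Set X) : Prop :=
  ∃ x₀ : X, GCategoricalAt G X U x₀

/-- The equivariant Lusternik–Schnirelmann category: the least `k` such that `X` is covered by
`k` open invariant `G`-categorical sets; `⊤` if there is no such cover. -/
noncomputable def eqLS : ℕ∞ :=
  sInf {k : ℕ∞ | ∃ n : ℕ, k = n ∧ ∃ U : Fin n → Set X,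
    (∀ i, IsOpen (U i)) ∧ (∀ i, GInvariant G (U i)) ∧ (⋃ i, U i) = Set.univ ∧
    ∀ i, GCategorical G X (U i)}

end Equivariant
/-! ### Module C: ordered G-simplicial complexes and their geometric realizations -/

/-- An ordered `G`-simplicial complex: a finite abstract simplicial complex whose vertex set
carries a partial order in which every simplex is totally ordered, together with an action of
`G` on the vertices by monotone simplicial maps. -/
structure GOSC (G : Type) [Group G] : Type 1 where
  /-- the vertex set -/
  V : Type
  [fin : Fintype V]
  [dec : DecidableEq V]
  [po : PartialOrder V]
  /-- the set of simplices -/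
  faces : Set (Finset V)
  singleton_mem : ∀ v : V, {v} ∈ faces
  nonempty_of_mem : ∀ s ∈ faces, s.Nonempty
  down_closed : ∀ s ∈ faces, ∀ t ⊆ s, t.Nonempty → t ∈ faces
  face_chain : ∀ s ∈ faces, ∀ x ∈ s, ∀ y ∈ s, x ≤ y ∨ y ≤ x
  /-- the action of `G` on vertices -/
  smul : G → V → V
  smul_one : ∀ v, smul 1 v = v
  smul_mul : ∀ g h v, smul (g * h) v = smul g (smul h v)
  smul_mono : ∀ g : G, ∀ x y : V, x ≤ y → smul g x ≤ smul g y
  smul_faces : ∀ g : G, ∀ s ∈ faces, s.image (smul g) ∈ faces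

attribute [instance] GOSC.fin GOSC.dec GOSC.po

namespace GOSC

variable {G : Type} [Group G]

/-- The underlying set of the geometric realization `|K|`: formal convex combinations of
vertices whose support is a simplex of `K`. -/
def realSet (K : GOSC G) : Set (K.V → ℝ) :=
  {f | (∀ v, 0 ≤ f v) ∧ (∑ v, f v) = 1 ∧ ∃ s ∈ K.faces, ∀ v, f v ≠ 0 → v ∈ s}

/-- The geometric realization `|K|` of an ordered `G`-simplicial complex, topologized as a
subspace of Euclidean space `K.V → ℝ`. -/
def Real (K : GOSC G) : Type := {f : K.V → ℝ // f ∈ K.realSet}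

instance (K : GOSC G) : TopologicalSpace K.Real :=
  inferInstanceAs (TopologicalSpace {f : K.V → ℝ // f ∈ K.realSet})

/-- Each `g : G` acts on `K.V` by an order isomorphism. -/
def permOf (K : GOSC G) (g : G) : Equiv K.V K.V where
  toFun := K.smul g
  invFun := K.smul g⁻¹
  left_inv := fun v => by
    rw [← K.smul_mul, inv_mul_cancel, K.smul_one]
  right_inv := fun v => by
    rw [← K.smul_mul, mul_inv_cancel, K.smul_one]

/-- The action of `G` on the geometric realization, by affine extension:
`(g • f) v = f (g⁻¹ • v)`. -/
instance (K : GOSC G) : SMul G K.Real where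
  smul g f := ⟨fun v => f.val (K.smul g⁻¹ v), by
    obtain ⟨hnn, hsum, s, hs, hsupp⟩ := f.prop
    refine ⟨fun v => hnn _, ?_, s.image (K.smul g), K.smul_faces g s hs, ?_⟩
    · rw [show (∑ v, f.val (K.smul g⁻¹ v)) = ∑ v, f.val (K.permOf g⁻¹ v) from rfl,
        Equiv.sum_comp (K.permOf g⁻¹) f.val]
      exact hsum
    · intro v hv
      have : K.smul g⁻¹ v ∈ s := hsupp _ hv
      refine Finset.mem_image.mpr ⟨K.smul g⁻¹ v, this, ?_⟩
      rw [← K.smul_mul, mul_inv_cancel, K.smul_one]⟩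

lemma smul_apply (K : GOSC G) (g : G) (f : K.Real) (v : K.V) :
    (g • f).val v = f.val (K.smul g⁻¹ v) := rfl

instance (K : GOSC G) : MulAction G K.Real where
  one_smul f := by
    apply Subtype.ext
    funext v
    rw [smul_apply, inv_one, K.smul_one]
  mul_smul g h f := by
    apply Subtype.ext
    funext v
    rw [smul_apply, smul_apply, smul_apply, mul_inv_rev, K.smul_mul]

end GOSC

/-- The two projections `p₁, p₂ : |K| × |K| → |K|` restricted to `C` are `G`-homotopic:
there is a continuous equivariant homotopy `C × I → |K|` from the first projection to the
second. -/
def ProjGHomotopic {G : Type} [Group G] (K : GOSC G) (C : Set (K.Real × K.Real)) : Prop :=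
  ∃ F : C × unitInterval → K.Real, Continuous F ∧
    (∀ u : C, F (u, 0) = (u : K.Real × K.Real).1) ∧
    (∀ u : C, F (u, 1) = (u : K.Real × K.Real).2) ∧
    (∀ (g : G) (u : C) (h : g • (u : K.Real × K.Real) ∈ C) (t : unitInterval),
      F (⟨g • (u : K.Real × K.Real), h⟩, t) = g • F (u, t))

/-- `C_G(|K|)`: the least number of closed invariant sets covering `|K| × |K|` on each of
which the two projections are `G`-homotopic; `⊤` if there is no such cover. -/
noncomputable def closedTC {G : Type} [Group G] (K : GOSC G) : ℕ∞ :=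
  sInf {k : ℕ∞ | ∃ n : ℕ, k = n ∧ ∃ U : Fin n → Set (K.Real × K.Real),
    (∀ i, IsClosed (U i)) ∧ (∀ i, GInvariant G (U i)) ∧ (⋃ i, U i) = Set.univ ∧
    ∀ i, ProjGHomotopic K (U i)}

/-!
The realization `|K|` is an equivariant neighbourhood retract of the permutation representation
`K.V → ℝ`. By the equivariant Tietze theorem, a `G`-homotopy on a closed invariant set `C` extends,
as a map into that representation with the prescribed endpoints, to the whole of `|K| × |K|`. By
compactness of the interval it still takes values in the domain of the retraction over an open
invariant neighbourhood of `C`, and retracting gives a `G`-homotopy there. Conversely, the closed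
sets of a shrinking of an open invariant cover become invariant, and remain closed, after
saturation, since `G` acts through a finite group.
-/

open scoped Pointwise unitInterval

section FiniteQuotient

variable {G X : Type*} [Group G] [MulAction G X] {N : Subgroup G}

lemma smul_eq_smul_of_inv_mul_mem (hX : ∀ n ∈ N, ∀ x : X, n • x = x) {a b : G}
    (h : a⁻¹ * b ∈ N) (x : X) : a • x = b • x := by
  rw [eq_comm, ← inv_smul_eq_iff, smul_smul]
  exact hX _ h x

lemma gInvariant_iUnion_smul (D : Set X) : GInvariant G (⋃ g : G, g • D) := by
  intro g x hx
  obtain ⟨k, hk⟩ := Set.mem_iUnion.1 hx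
  refine Set.mem_iUnion.2 ⟨g * k, ?_⟩
  rw [mul_smul]
  exact Set.smul_mem_smul_set hk

lemma subset_iUnion_smul (D : Set X) : D ⊆ ⋃ g : G, g • D := by
  simpa only [one_smul] using Set.subset_iUnion (fun g : G => g • D) 1

lemma GInvariant.iUnion_smul_subset {U D : Set X} (hU : GInvariant G U) (hD : D ⊆ U) :
    ⋃ g : G, g • D ⊆ U := by
  refine Set.iUnion_subset fun g => ?_
  rintro _ ⟨x, hx, rfl⟩
  exact hU g x (hD hx)

variable [TopologicalSpace X] [ContinuousConstSMul G X]

lemma isClosed_iUnion_smul [N.FiniteIndex] (hX : ∀ n ∈ N, ∀ x : X, n • x = x) {D : Set X}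
    (hD : IsClosed D) : IsClosed (⋃ g : G, g • D) := by
  have translate_eq (g : G) : (g : G ⧸ N).out • D = g • D :=
    Set.image_congr fun x _ => smul_eq_smul_of_inv_mul_mem hX
      (QuotientGroup.eq.1 (QuotientGroup.out_eq' _)) x
  have translates_finite : (Set.range fun g : G => g • D).Finite :=
    (Set.finite_range fun q : G ⧸ N => q.out • D).subset <|
      Set.range_subset_iff.2 fun g => ⟨g, translate_eq g⟩
  rw [← Set.sUnion_range, Set.sUnion_eq_biUnion]
  refine translates_finite.isClosed_biUnion ?_
  rintro _ ⟨g, rfl⟩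
  exact hD.smul g

theorem exists_iUnion_eq_isClosed_gInvariant_subset [NormalSpace X] [N.FiniteIndex]
    (hX : ∀ n ∈ N, ∀ x : X, n • x = x) {ι : Type*} {U : ι → Set X} (hU : ∀ i, IsOpen (U i))
    (hinv : ∀ i, GInvariant G (U i)) (hfin : ∀ x, {i | x ∈ U i}.Finite)
    (hcover : ⋃ i, U i = Set.univ) :
    ∃ C : ι → Set X, (⋃ i, C i) = Set.univ ∧ (∀ i, IsClosed (C i)) ∧
      (∀ i, GInvariant G (C i)) ∧ ∀ i, C i ⊆ U i := by
  obtain ⟨D, D_cover, D_closed, D_subset⟩ := exists_iUnion_eq_closed_subset hU hfin hcover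
  refine ⟨fun i => ⋃ g : G, g • D i, ?_, fun i => isClosed_iUnion_smul hX (D_closed i),
    fun i => gInvariant_iUnion_smul _, fun i => (hinv i).iUnion_smul_subset (D_subset i)⟩
  exact Set.univ_subset_iff.1 (D_cover ▸ Set.iUnion_mono fun i => subset_iUnion_smul _)

end FiniteQuotient

section EquivariantTietze

variable {G : Type*} [Group G] {N : Subgroup G} {X : Type*} [MulAction G X] {T : Type*}
  {E : Type*} [AddCommGroup E] [Module ℝ E] {ρ : Representation ℝ G E}

lemma translate_eq_of_inv_mul_mem (hX : ∀ n ∈ N, ∀ x : X, n • x = x) (hρ : N ≤ ρ.ker) {a b : G}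
    (h : a⁻¹ * b ∈ N) (f : X × T → E) (x : X) (t : T) :
    ρ a (f (a⁻¹ • x, t)) = ρ b (f (b⁻¹ • x, t)) := by
  have hρab : ρ a = ρ b := by
    have hker : ρ (a⁻¹ * b) = 1 := hρ h
    rw [← mul_one (ρ a), ← hker, ← map_mul, mul_inv_cancel_left]
  have hXab : a⁻¹ • x = b⁻¹ • x := by
    rw [inv_smul_eq_iff, smul_eq_smul_of_inv_mul_mem hX h, smul_inv_smul]
  rw [hρab, hXab]

variable (N ρ) in
/-- The average of the translates `(x, t) ↦ ρ g (f (g⁻¹ • x, t))` of a map into a representation,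
over representatives of the cosets of a finite-index subgroup `N`. It is independent of the
representatives when `N` acts trivially on `X` and `E`. The parameter space `T` carries no
action. -/
noncomputable def equivariantAverage [Fintype (G ⧸ N)] (f : X × T → E) (p : X × T) : E :=
  (Fintype.card (G ⧸ N) : ℝ)⁻¹ • ∑ q : G ⧸ N, ρ q.out (f (q.out⁻¹ • p.1, p.2))

lemma equivariantAverage_smul [Fintype (G ⧸ N)] (hX : ∀ n ∈ N, ∀ x : X, n • x = x)
    (hρ : N ≤ ρ.ker) (f : X × T → E) (g : G) (x : X) (t : T) :
    equivariantAverage N ρ f (g • x, t) = ρ g (equivariantAverage N ρ f (x, t)) := by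
  simp only [equivariantAverage, map_smul, map_sum]
  congr 1
  symm
  refine Fintype.sum_equiv (MulAction.toPerm g) _ _ fun q => ?_
  have same_coset : (g * q.out)⁻¹ * (g • q).out ∈ N := by
    rw [← QuotientGroup.eq, QuotientGroup.out_eq', ← smul_eq_mul, MulAction.Quotient.mk_smul_out]
  calc ρ g (ρ q.out (f (q.out⁻¹ • x, t)))
      = ρ (g * q.out) (f ((g * q.out)⁻¹ • g • x, t)) := by
        rw [map_mul, Module.End.mul_apply, mul_inv_rev, mul_smul, inv_smul_smul]
    _ = ρ (g • q).out (f ((g • q).out⁻¹ • g • x, t)) :=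
        translate_eq_of_inv_mul_mem hX hρ same_coset f _ t

lemma equivariantAverage_eq_self [Fintype (G ⧸ N)] {f : X × T → E} {x : X} {t : T}
    (hf : ∀ g : G, f (g • x, t) = ρ g (f (x, t))) :
    equivariantAverage N ρ f (x, t) = f (x, t) := by
  have translate_eq (g : G) : ρ g (f (g⁻¹ • x, t)) = f (x, t) := by
    rw [hf, Representation.self_inv_apply]
  have card_ne_zero : (Fintype.card (G ⧸ N) : ℝ) ≠ 0 := Nat.cast_ne_zero.2 Fintype.card_ne_zero
  simp only [equivariantAverage, translate_eq, Finset.sum_const, Finset.card_univ]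
  rw [← Nat.cast_smul_eq_nsmul ℝ, inv_smul_smul₀ card_ne_zero]

end EquivariantTietze

section EquivariantExtension

universe u v w

variable {G : Type*} [Group G] {N : Subgroup G}
  {X : Type u} [TopologicalSpace X] [MulAction G X] [ContinuousConstSMul G X]
  {E : Type v} [AddCommGroup E] [Module ℝ E] [TopologicalSpace E] {ρ : Representation ℝ G E}

lemma continuous_equivariantAverage {T : Type*} [TopologicalSpace T] [Fintype (G ⧸ N)]
    [ContinuousAdd E] [ContinuousConstSMul ℝ E] (hρ : ∀ g, Continuous (ρ g)) {f : X × T → E}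
    (hf : Continuous f) : Continuous (equivariantAverage N ρ f) := by
  refine (continuous_finsetSum _ fun q _ => (hρ _).comp (hf.comp ?_)).const_smul _
  exact (continuous_fst.const_smul _).prodMk continuous_snd

theorem exists_equivariant_extension {T : Type w} [TopologicalSpace T] [NormalSpace (X × T)]
    [ContinuousAdd E] [ContinuousConstSMul ℝ E] [TietzeExtension.{max u w, v} E] [N.FiniteIndex]
    (hX : ∀ n ∈ N, ∀ x : X, n • x = x) (hN : N ≤ ρ.ker) (hρ : ∀ g, Continuous (ρ g))
    {C : Set X} (hC : IsClosed C) (hinv : GInvariant G C) (f : C(C × T, E))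
    (hf : ∀ (g : G) (x : C) (h : g • (x : X) ∈ C) (t : T),
      f (⟨g • (x : X), h⟩, t) = ρ g (f (x, t))) :
    ∃ φ : C(X × T, E), (∀ (g : G) (x : X) (t : T), φ (g • x, t) = ρ g (φ (x, t))) ∧
      ∀ (x : C) (t : T), φ (x, t) = f (x, t) := by
  let _ := N.fintypeQuotientOfFiniteIndex
  have hemb : Topology.IsClosedEmbedding (Prod.map Subtype.val id : C × T → X × T) :=
    hC.isClosedEmbedding_subtypeVal.prodMap .id
  obtain ⟨ψ, hψ⟩ := f.exists_extension' hemb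
  have ψ_eq (x : C) (t : T) : ψ (x, t) = f (x, t) := congrFun hψ (x, t)
  refine ⟨⟨equivariantAverage N ρ ψ, continuous_equivariantAverage hρ ψ.continuous⟩,
    equivariantAverage_smul hX hN ψ, fun x t => ?_⟩
  have ψ_smul (g : G) : ψ (g • (x : X), t) = ρ g (ψ (x, t)) := by
    rw [ψ_eq ⟨_, hinv g x x.2⟩, hf g x, ψ_eq]
  exact (equivariantAverage_eq_self ψ_smul).trans (ψ_eq x t)

theorem exists_equivariant_homotopy_extension [NormalSpace (X × I)] [IsTopologicalAddGroup E]
    [ContinuousSMul ℝ E] [TietzeExtension.{u, v} E] [N.FiniteIndex]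
    (hX : ∀ n ∈ N, ∀ x : X, n • x = x) (hN : N ≤ ρ.ker) (hρ : ∀ g, Continuous (ρ g))
    {f₀ f₁ : C(X, E)} (hf₀ : ∀ (g : G) x, f₀ (g • x) = ρ g (f₀ x))
    (hf₁ : ∀ (g : G) x, f₁ (g • x) = ρ g (f₁ x))
    {C : Set X} (hC : IsClosed C) (hinv : GInvariant G C) (F : C(C × I, E))
    (hF₀ : ∀ x : C, F (x, 0) = f₀ x) (hF₁ : ∀ x : C, F (x, 1) = f₁ x)
    (hF : ∀ (g : G) (x : C) (h : g • (x : X) ∈ C) (t : I),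
      F (⟨g • (x : X), h⟩, t) = ρ g (F (x, t))) :
    ∃ Φ : C(X × I, E), (∀ x, Φ (x, 0) = f₀ x) ∧ (∀ x, Φ (x, 1) = f₁ x) ∧
      (∀ (g : G) (x : X) (t : I), Φ (g • x, t) = ρ g (Φ (x, t))) ∧
      ∀ (x : C) (t : I), Φ (x, t) = F (x, t) := by
  obtain ⟨φ, φ_smul, φ_eq⟩ := exists_equivariant_extension hX hN hρ hC hinv F hF
  -- An affine correction in `t`, vanishing over `C`, gives the extension the right endpoints.
  refine ⟨⟨fun p => φ p + (1 - (p.2 : ℝ)) • (f₀ p.1 - φ (p.1, 0)) +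
    (p.2 : ℝ) • (f₁ p.1 - φ (p.1, 1)), by fun_prop⟩, fun x => ?_, fun x => ?_,
    fun g x t => ?_, fun x t => ?_⟩
  · simp
  · simp
  · simp [hf₀, hf₁, φ_smul]
  · simp [φ_eq, hF₀, hF₁]

end EquivariantExtension

section GHomotopicOn

variable (G : Type*) [Group G] {X Y : Type*} [TopologicalSpace X] [MulAction G X]
  [TopologicalSpace Y] [MulAction G Y]

/-- The restrictions of `f₀` and `f₁` to `C` are `G`-homotopic. -/
def GHomotopicOn (f₀ f₁ : X → Y) (C : Set X) : Prop :=
  ∃ F : C × I → Y, Continuous F ∧ (∀ x : C, F (x, 0) = f₀ x) ∧ (∀ x : C, F (x, 1) = f₁ x) ∧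
    ∀ (g : G) (x : C) (h : g • (x : X) ∈ C) (t : I), F (⟨g • (x : X), h⟩, t) = g • F (x, t)

variable {G}

lemma GHomotopicOn.mono {f₀ f₁ : X → Y} {C U : Set X} (h : GHomotopicOn G f₀ f₁ U)
    (hCU : C ⊆ U) : GHomotopicOn G f₀ f₁ C := by
  obtain ⟨F, F_cont, F_zero, F_one, F_smul⟩ := h
  exact ⟨fun p => F (Set.inclusion hCU p.1, p.2),
    F_cont.comp (((continuous_inclusion hCU).comp continuous_fst).prodMk continuous_snd),
    fun x => F_zero _, fun x => F_one _,
    fun g x hgx t => F_smul g (Set.inclusion hCU x) (hCU hgx) t⟩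

lemma eqNavigable_iff_gHomotopicOn {U : Set (Y × Y)} :
    EqNavigable G Y U ↔ GHomotopicOn G Prod.fst Prod.snd U := by
  constructor
  · rintro ⟨s, s_cont, s_ends, s_smul⟩
    exact ⟨fun p => s p.1 p.2, (s_cont.comp continuous_fst).eval continuous_snd,
      fun u => (s_ends u).1, fun u => (s_ends u).2, s_smul⟩
  · rintro ⟨F, F_cont, F_zero, F_one, F_smul⟩
    let H : C(U × I, Y) := ⟨F, F_cont⟩
    exact ⟨H.curry, H.curry.continuous, fun u => ⟨F_zero u, F_one u⟩, F_smul⟩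

end GHomotopicOn

lemma normalSpace_of_prod {X T : Type*} [TopologicalSpace X] [TopologicalSpace T] [T1Space T]
    [NormalSpace (X × T)] (t : T) : NormalSpace X := by
  have range_eq : Set.range (fun x : X => (x, t)) = Prod.snd ⁻¹' {t} := by
    ext ⟨x, t'⟩
    simp [eq_comm]
  exact Topology.IsClosedEmbedding.normalSpace
    ⟨isEmbedding_prodMkLeft t, range_eq ▸ isClosed_singleton.preimage continuous_snd⟩

section EquivariantNeighborhoodRetract

universe u v

variable {G : Type*} [Group G]
  {E : Type v} [AddCommGroup E] [Module ℝ E] [TopologicalSpace E]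

/-- An equivariant neighbourhood retraction onto the `G`-space `Y`: an equivariant map `incl` to
the representation `ρ`, together with an equivariant left inverse `retr` defined on an open
invariant set `domain` containing the image of `incl`. -/
structure EquivariantNeighborhoodRetract (ρ : Representation ℝ G E) (Y : Type*)
    [TopologicalSpace Y] [MulAction G Y] where
  incl : C(Y, E)
  incl_smul : ∀ (g : G) (y : Y), incl (g • y) = ρ g (incl y)
  domain : Set E
  isOpen_domain : IsOpen domain
  map_mem_domain : ∀ (g : G), ∀ e ∈ domain, ρ g e ∈ domain
  incl_mem_domain : ∀ y, incl y ∈ domain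
  retr : C(domain, Y)
  retr_map : ∀ (g : G) (e : domain) (h : ρ g e ∈ domain), retr ⟨ρ g e, h⟩ = g • retr e
  retr_incl : ∀ y, retr ⟨incl y, incl_mem_domain y⟩ = y

variable {N : Subgroup G} [N.FiniteIndex] {ρ : Representation ℝ G E}
  {X : Type u} [TopologicalSpace X] [MulAction G X] [ContinuousConstSMul G X]
  [NormalSpace (X × I)] [IsTopologicalAddGroup E] [ContinuousSMul ℝ E] [TietzeExtension.{u, v} E]
  {Y : Type*} [TopologicalSpace Y] [MulAction G Y] {f₀ f₁ : X → Y}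

theorem GHomotopicOn.exists_isOpen_gInvariant_superset
    (R : EquivariantNeighborhoodRetract ρ Y) (hX : ∀ n ∈ N, ∀ x : X, n • x = x)
    (hN : N ≤ ρ.ker) (hρ : ∀ g, Continuous (ρ g)) (hf₀ : Continuous f₀) (hf₁ : Continuous f₁)
    (hf₀_smul : ∀ (g : G) x, f₀ (g • x) = g • f₀ x)
    (hf₁_smul : ∀ (g : G) x, f₁ (g • x) = g • f₁ x) {C : Set X} (hC : IsClosed C)
    (hinv : GInvariant G C) (h : GHomotopicOn G f₀ f₁ C) :
    ∃ U : Set X, C ⊆ U ∧ IsOpen U ∧ GInvariant G U ∧ GHomotopicOn G f₀ f₁ U := by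
  obtain ⟨F, F_cont, F_zero, F_one, F_smul⟩ := h
  obtain ⟨Φ, Φ_zero, Φ_one, Φ_smul, Φ_eq⟩ := exists_equivariant_homotopy_extension hX hN hρ
    (f₀ := R.incl.comp ⟨f₀, hf₀⟩) (f₁ := R.incl.comp ⟨f₁, hf₁⟩)
    (fun g x => by simp [hf₀_smul, R.incl_smul]) (fun g x => by simp [hf₁_smul, R.incl_smul])
    hC hinv (R.incl.comp ⟨F, F_cont⟩)
    (fun x => by simp [F_zero]) (fun x => by simp [F_one])
    (fun g x hgx t => by simp [F_smul g x hgx, R.incl_smul])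
  let U : Set X := {x | ∀ t, Φ (x, t) ∈ R.domain}
  have U_open : IsOpen U := by
    have := (ContinuousMap.isOpen_setOfPred_mapsTo isCompact_univ R.isOpen_domain).preimage
      Φ.curry.continuous
    simpa [U, Set.MapsTo] using this
  let r (p : U × I) : Y := R.retr ⟨Φ (p.1, p.2), p.1.2 p.2⟩
  have r_cont : Continuous r := R.retr.continuous.comp (by fun_prop)
  have r_eq {x : U} {t : I} {y : Y} (hy : Φ (x, t) = R.incl y) : r (x, t) = y := by
    simp only [r, hy, R.retr_incl]
  refine ⟨U, fun x hx t => ?_, U_open, fun g x hx t => ?_, r, r_cont,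
    fun x => r_eq (Φ_zero x), fun x => r_eq (Φ_one x), fun g x hgx t => ?_⟩
  · rw [Φ_eq ⟨x, hx⟩ t]
    exact R.incl_mem_domain _
  · rw [Φ_smul]
    exact R.map_mem_domain g _ (hx t)
  · simp only [r, Φ_smul]
    exact R.retr_map g ⟨Φ (x, t), x.2 t⟩ _

theorem exists_isOpen_cover_iff_exists_isClosed_cover
    (R : EquivariantNeighborhoodRetract ρ Y) (hX : ∀ n ∈ N, ∀ x : X, n • x = x)
    (hN : N ≤ ρ.ker) (hρ : ∀ g, Continuous (ρ g)) (hf₀ : Continuous f₀) (hf₁ : Continuous f₁)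
    (hf₀_smul : ∀ (g : G) x, f₀ (g • x) = g • f₀ x)
    (hf₁_smul : ∀ (g : G) x, f₁ (g • x) = g • f₁ x) {ι : Type*} [Finite ι] :
    (∃ U : ι → Set X, (∀ i, IsOpen (U i)) ∧ (∀ i, GInvariant G (U i)) ∧
      (⋃ i, U i) = Set.univ ∧ ∀ i, GHomotopicOn G f₀ f₁ (U i)) ↔
    ∃ C : ι → Set X, (∀ i, IsClosed (C i)) ∧ (∀ i, GInvariant G (C i)) ∧
      (⋃ i, C i) = Set.univ ∧ ∀ i, GHomotopicOn G f₀ f₁ (C i) := by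
  constructor
  · rintro ⟨U, U_open, U_inv, U_cover, U_homotopic⟩
    have : NormalSpace X := normalSpace_of_prod (0 : I)
    obtain ⟨C, C_cover, C_closed, C_inv, C_subset⟩ :=
      exists_iUnion_eq_isClosed_gInvariant_subset hX U_open U_inv (fun _ => Set.toFinite _) U_cover
    exact ⟨C, C_closed, C_inv, C_cover, fun i => (U_homotopic i).mono (C_subset i)⟩
  · rintro ⟨C, C_closed, C_inv, C_cover, C_homotopic⟩
    choose U C_subset U_open U_inv U_homotopic using fun i =>
      (C_homotopic i).exists_isOpen_gInvariant_superset R hX hN hρ hf₀ hf₁ hf₀_smul hf₁_smul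
        (C_closed i) (C_inv i)
    exact ⟨U, U_open, U_inv, Set.univ_subset_iff.1 (C_cover ▸ Set.iUnion_mono C_subset),
      U_homotopic⟩

end EquivariantNeighborhoodRetract

namespace GOSC

variable {G : Type} [Group G] (K : GOSC G)

instance : TopologicalSpace.MetrizableSpace K.Real :=
  inferInstanceAs (TopologicalSpace.MetrizableSpace {f : K.V → ℝ // f ∈ K.realSet})

lemma continuous_val : Continuous (fun x : K.Real => (x.val : K.V → ℝ)) :=
  continuous_subtype_val

instance : ContinuousConstSMul G K.Real where
  continuous_const_smul g := Continuous.subtype_mk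
    (continuous_pi fun v => (continuous_apply (K.smul g⁻¹ v)).comp K.continuous_val) _

/-- The action of `G` on the vertices of `K`, as a permutation representation. -/
def permHom : G →* Equiv.Perm K.V where
  toFun := K.permOf
  map_one' := Equiv.ext K.smul_one
  map_mul' g h := Equiv.ext (K.smul_mul g h)

/-- The linear action `(g • f) v = f (g⁻¹ • v)` of `G` on functions on the vertices of `K`, which
restricts to the action on `|K|`. -/
def vertexRep : Representation ℝ G (K.V → ℝ) where
  toFun g := LinearMap.funLeft ℝ ℝ (K.permHom g⁻¹)
  map_one' := by ext; simp
  map_mul' g h := by ext; simp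

lemma vertexRep_apply (g : G) (f : K.V → ℝ) (v : K.V) :
    K.vertexRep g f v = f (K.permHom g⁻¹ v) := rfl

lemma continuous_vertexRep (g : G) : Continuous (K.vertexRep g) :=
  continuous_pi fun v => continuous_apply (K.permHom g⁻¹ v)

lemma vertexRep_val (g : G) (x : K.Real) : K.vertexRep g x.val = (g • x).val := rfl

lemma ker_permHom_le_ker_vertexRep : K.permHom.ker ≤ K.vertexRep.ker := by
  intro n hn
  refine LinearMap.ext fun f => funext fun v => ?_
  rw [vertexRep_apply, K.permHom.mem_ker.1 (inv_mem hn)]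
  rfl

lemma smul_eq_self_of_mem_ker_permHom {n : G} (hn : n ∈ K.permHom.ker) (x : K.Real) :
    n • x = x :=
  Subtype.ext <| (K.vertexRep_val n x).symm.trans <|
    DFunLike.congr_fun (K.ker_permHom_le_ker_vertexRep hn) x.val

lemma map_permHom_mem_faces_iff (g : G) {s : Finset K.V} :
    s.map (K.permHom g).toEmbedding ∈ K.faces ↔ s ∈ K.faces := by
  have map_mem (g : G) (s : Finset K.V) (hs : s ∈ K.faces) :
      s.map (K.permHom g).toEmbedding ∈ K.faces := by
    rw [Finset.map_eq_image]
    exact K.smul_faces g s hs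
  refine ⟨fun h => ?_, map_mem g s⟩
  simpa [Finset.map_map, ← Equiv.trans_toEmbedding, ← Equiv.Perm.mul_def, ← map_mul]
    using map_mem g⁻¹ _ h

/-- The nonempty sets of vertices that are not simplices of `K`. -/
def Nonface : Type := {s : Finset K.V // s.Nonempty ∧ s ∉ K.faces}

noncomputable instance : Fintype K.Nonface :=
  @Fintype.ofFinite _ (inferInstanceAs (Finite {s : Finset K.V // s.Nonempty ∧ s ∉ K.faces}))

/-- The permutation of the non-faces of `K` induced by `g`. -/
def nonfacePerm (g : G) : Equiv.Perm K.Nonface :=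
  (K.permHom g).finsetCongr.subtypeEquiv fun s => by
    simp [map_permHom_mem_faces_iff]

variable {K}

/-- The positive part of the minimum of `f` on a non-face. It vanishes on `|K|`, and `f`
cannot exceed it at every vertex of the non-face. -/
noncomputable def Nonface.height (s : K.Nonface) (f : K.V → ℝ) : ℝ := (s.1.inf' s.2.1 f)⁺

lemma Nonface.height_nonfacePerm (g : G) (s : K.Nonface) (f : K.V → ℝ) :
    (K.nonfacePerm g s).height f = s.height (f ∘ K.permHom g) :=
  congrArg (·⁺) (Finset.inf'_map _ _)

lemma Nonface.continuous_height (s : K.Nonface) : Continuous s.height :=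
  continuous_posPart.comp (Continuous.finset_inf'_apply s.2.1 fun v _ => continuous_apply v)

lemma Nonface.exists_mem_val_eq_zero (s : K.Nonface) (x : K.Real) : ∃ v ∈ s.1, x.val v = 0 := by
  obtain ⟨-, -, t, t_mem, support_subset⟩ := x.prop
  by_contra! hne
  exact s.2.2 (K.down_closed t t_mem s.1 (fun v hv => support_subset v (hne v hv)) s.2.1)

lemma Nonface.height_val (s : K.Nonface) (x : K.Real) : s.height x.val = 0 := by
  obtain ⟨v, hv, hv0⟩ := s.exists_mem_val_eq_zero x
  exact posPart_of_nonpos ((Finset.inf'_le _ hv).trans_eq hv0)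

variable (K)

/-- The total height of the non-faces of `K`: the vertices at which `f` exceeds it form a simplex,
if there are any. -/
noncomputable def cutoff (f : K.V → ℝ) : ℝ := ∑ s : K.Nonface, s.height f

lemma continuous_cutoff : Continuous K.cutoff :=
  continuous_finsetSum _ fun s _ => s.continuous_height

lemma cutoff_vertexRep (g : G) (f : K.V → ℝ) : K.cutoff (K.vertexRep g f) = K.cutoff f :=
  Fintype.sum_equiv (K.nonfacePerm g⁻¹) _ _ fun s => (s.height_nonfacePerm g⁻¹ f).symm

lemma cutoff_val (x : K.Real) : K.cutoff x.val = 0 :=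
  Finset.sum_eq_zero fun s _ => s.height_val x

lemma mem_faces_of_cutoff_lt {f : K.V → ℝ} {s : Finset K.V} (hs : s.Nonempty)
    (hlt : ∀ v ∈ s, K.cutoff f < f v) : s ∈ K.faces := by
  by_contra hface
  let t : K.Nonface := ⟨s, hs, hface⟩
  have height_le : t.height f ≤ K.cutoff f :=
    Finset.single_le_sum (f := fun t : K.Nonface => t.height f)
      (fun t _ => posPart_nonneg _) (Finset.mem_univ t)
  have lt_height : K.cutoff f < t.height f :=
    ((Finset.lt_inf'_iff hs).2 hlt).trans_le (le_posPart _)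
  exact height_le.not_gt lt_height

/-- The part of `f` above the cutoff. -/
noncomputable def truncation (f : K.V → ℝ) (v : K.V) : ℝ := (f v - K.cutoff f)⁺

lemma continuous_truncation : Continuous K.truncation :=
  continuous_pi fun v => continuous_posPart.comp ((continuous_apply v).sub K.continuous_cutoff)

lemma truncation_vertexRep (g : G) (f : K.V → ℝ) :
    K.truncation (K.vertexRep g f) = K.vertexRep g (K.truncation f) := by
  ext v
  simp only [truncation, cutoff_vertexRep, vertexRep_apply]

lemma truncation_val (x : K.Real) : K.truncation x.val = x.val := by
  ext v
  rw [truncation, cutoff_val, sub_zero, posPart_of_nonneg (x.prop.1 v)]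

lemma truncation_nonneg (f : K.V → ℝ) (v : K.V) : 0 ≤ K.truncation f v := posPart_nonneg _

lemma cutoff_lt_of_truncation_ne_zero {f : K.V → ℝ} {v : K.V} (h : K.truncation f v ≠ 0) :
    K.cutoff f < f v := by
  contrapose! h
  exact posPart_of_nonpos (sub_nonpos.2 h)

/-- The total mass of the truncation of `f`. -/
noncomputable def mass (f : K.V → ℝ) : ℝ := ∑ v, K.truncation f v

lemma continuous_mass : Continuous K.mass :=
  continuous_finsetSum _ fun v _ => (continuous_apply v).comp K.continuous_truncation

lemma mass_vertexRep (g : G) (f : K.V → ℝ) : K.mass (K.vertexRep g f) = K.mass f := by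
  rw [mass, truncation_vertexRep]
  exact Equiv.sum_comp (K.permHom g⁻¹) (K.truncation f)

lemma mass_val (x : K.Real) : K.mass x.val = 1 := by
  rw [mass, truncation_val]
  exact x.prop.2.1

lemma inv_mass_smul_truncation_mem_realSet {f : K.V → ℝ} (hf : 0 < K.mass f) :
    (K.mass f)⁻¹ • K.truncation f ∈ K.realSet := by
  refine ⟨fun v => mul_nonneg (inv_nonneg.2 hf.le) (K.truncation_nonneg f v), ?_,
    Finset.univ.filter (K.truncation f · ≠ 0), ?_, fun v hv => ?_⟩
  · simp only [Pi.smul_apply, smul_eq_mul, ← Finset.mul_sum]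
    exact inv_mul_cancel₀ hf.ne'
  · obtain ⟨v, -, hv⟩ := Finset.exists_ne_zero_of_sum_ne_zero hf.ne'
    refine K.mem_faces_of_cutoff_lt (f := f) ⟨v, by simpa using hv⟩ fun w hw => ?_
    exact K.cutoff_lt_of_truncation_ne_zero (Finset.mem_filter.1 hw).2
  · simpa using right_ne_zero_of_mul hv

/-- The map to `|K|` that truncates a function on the vertices at its cutoff and normalizes the
result to total mass one. -/
noncomputable def retraction : C({f : K.V → ℝ | 0 < K.mass f}, K.Real) where
  toFun f := ⟨(K.mass f)⁻¹ • K.truncation f, K.inv_mass_smul_truncation_mem_realSet f.2⟩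
  continuous_toFun := Continuous.subtype_mk
    (((K.continuous_mass.comp continuous_subtype_val).inv₀ fun f => f.2.ne').smul
      (K.continuous_truncation.comp continuous_subtype_val)) _

lemma retraction_val (f : {f : K.V → ℝ | 0 < K.mass f}) :
    (K.retraction f).val = (K.mass f)⁻¹ • K.truncation f := rfl

lemma retraction_eq_of_eq_val {f : {f : K.V → ℝ | 0 < K.mass f}} {x : K.Real}
    (h : (f : K.V → ℝ) = x.val) : K.retraction f = x := by
  apply Subtype.ext
  rw [retraction_val, h, mass_val, truncation_val, inv_one, one_smul]

/-- The realization as an equivariant neighbourhood retract of the functions on the vertices. -/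
noncomputable def neighborhoodRetract : EquivariantNeighborhoodRetract K.vertexRep K.Real where
  incl := ⟨fun x => x.val, K.continuous_val⟩
  incl_smul g x := (K.vertexRep_val g x).symm
  domain := {f | 0 < K.mass f}
  isOpen_domain := isOpen_lt continuous_const K.continuous_mass
  map_mem_domain g f hf := hf.trans_eq (K.mass_vertexRep g f).symm
  incl_mem_domain x := one_pos.trans_eq (K.mass_val x).symm
  retr := K.retraction
  retr_map g f _ := Subtype.ext <| by
    rw [← vertexRep_val, retraction_val, retraction_val, mass_vertexRep, truncation_vertexRep,
      map_smul]
  retr_incl x := K.retraction_eq_of_eq_val rfl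

end GOSC

lemma projGHomotopic_iff_gHomotopicOn {G : Type} [Group G] {K : GOSC G}
    {C : Set (K.Real × K.Real)} :
    ProjGHomotopic K C ↔ GHomotopicOn G Prod.fst Prod.snd C := Iff.rfl

theorem eqTC_eq_closedTC_general (G : Type) [Group G] (K : GOSC G) :
    eqTC G K.Real = closedTC K := by
  have ker_smul : ∀ n ∈ K.permHom.ker, ∀ z : K.Real × K.Real, n • z = z := fun n hn z =>
    Prod.ext (K.smul_eq_self_of_mem_ker_permHom hn z.1) (K.smul_eq_self_of_mem_ker_permHom hn z.2)
  have covers_iff (n : ℕ) := exists_isOpen_cover_iff_exists_isClosed_cover (ι := Fin n)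
    K.neighborhoodRetract ker_smul K.ker_permHom_le_ker_vertexRep K.continuous_vertexRep
    continuous_fst continuous_snd (fun _ _ => rfl) (fun _ _ => rfl)
  simp only [eqTC, closedTC, eqNavigable_iff_gHomotopicOn, projGHomotopic_iff_gHomotopicOn,
    covers_iff]

/-- Let `G` be a finite group and `K` an ordered `G`-simplicial complex.
Then `TC_G(|K|) = C_G(|K|)`: the equivariant topological complexity of `|K|` can be computed
using closed invariant covers on which the two projections are `G`-homotopic. -/
theorem eqTC_eq_closedTC (G : Type) [Group G] [Finite G] (K : GOSC G) :
    eqTC G K.Real = closedTC K :=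
  eqTC_eq_closedTC_general G K
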